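/- arXiv:math/0502016 — 4 statements merged into one kernel-verified Lean document; each statement's English description precedes it below -/
import Mathlib

section
/- Let s ∈ ℂ with Re s > 1/2, and let f, h : (0,1) → ℂ be bounded measurable functions. Then ∫₀¹ f(x) · (Σ_{k=1}^∞ (x+k)^{−2s} h(1/(x+k))) dx = ∫₀¹ f(T(x)) · x^{2s−2} h(x) dx, where both integrals are with respect to Lebesgue measure on (0,1), the series converges absolutely for every x ∈ (0,1), and for t > 0 and w ∈ ℂ the power t^w denotes exp(w · log t). In other words, the transfer operator L_s defined by (L_s h)(x) = Σ_{k=1}^∞ (x+k)^{−2s} h(1/(x+k)) is dual to the action f ↦ (f∘T)·x^{2s−2} of the Gauss shift on (1−s)-densities. -/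
/-!
The inverse branches of the Gauss map are `x ↦ 1 / (x + k + 1)`, `k = 0, 1, 2, …`, mapping `(0,1)`
onto disjoint intervals which fill `(0,1)` up to the countable set of reciprocals of integers
(`iUnion_branch_ae_eq`). The substitution `x = 1 / (y + k + 1)` on the `k`-th interval has Jacobian
`(y + k + 1)⁻²`, which together with the factor `x ^ (2 s - 2)` gives `(y + k + 1) ^ (-2 s)`, and
`T x = y` (`setIntegral_branch`). Summing over `k` gives the identity. Countable additivity of the
right-hand integral is justified by the majorant `C x ^ (2 Re s - 2)` (`integrableOn_rhs`), and the
exchange of sum and integral on the left by the majorant `C (k + 1) ^ (-2 Re s)`.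
-/

open MeasureTheory Set

/-- The Gauss continued-fraction shift `T(x) = 1/x - ⌊1/x⌋`. -/
noncomputable def gaussMap (x : ℝ) : ℝ := 1 / x - ⌊1 / x⌋

/-- The `k`-th inverse branch of the Gauss map, indexed from `0`: `x ↦ 1 / (x + (k + 1))`. -/
noncomputable def branch (k : ℕ) (x : ℝ) : ℝ := 1 / (x + ((k : ℝ) + 1))

lemma branch_mem {k : ℕ} {x : ℝ} (hx : x ∈ Ioo (0 : ℝ) 1) : branch k x ∈ Ioo (0 : ℝ) 1 := by
  have hk : (0 : ℝ) ≤ k := k.cast_nonneg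
  have hpos : 0 < x + ((k : ℝ) + 1) := by linarith [hx.1]
  refine ⟨one_div_pos.2 hpos, ?_⟩
  rw [branch, div_lt_one hpos]
  linarith [hx.1]

lemma floor_inv_branch {k : ℕ} {x : ℝ} (hx : x ∈ Ioo (0 : ℝ) 1) :
    ⌊1 / branch k x⌋ = (k : ℤ) + 1 := by
  rw [branch, one_div_one_div, Int.floor_eq_iff]
  push_cast
  constructor <;> linarith [hx.1, hx.2]

lemma gaussMap_branch {k : ℕ} {x : ℝ} (hx : x ∈ Ioo (0 : ℝ) 1) : gaussMap (branch k x) = x := by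
  rw [gaussMap, floor_inv_branch hx, branch, one_div_one_div]
  push_cast
  ring

lemma injOn_branch (k : ℕ) : InjOn (branch k) (Ioo (0 : ℝ) 1) := by
  intro x hx y hy hxy
  rw [← gaussMap_branch (k := k) hx, hxy, gaussMap_branch hy]

lemma hasDerivAt_branch (k : ℕ) {x : ℝ} (hx : x ∈ Ioo (0 : ℝ) 1) :
    HasDerivAt (branch k) (-1 / (x + ((k : ℝ) + 1)) ^ 2) x := by
  have hk : (0 : ℝ) ≤ k := k.cast_nonneg
  have hpos : x + ((k : ℝ) + 1) ≠ 0 := by linarith [hx.1]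
  have h := ((hasDerivAt_id x).add_const ((k : ℝ) + 1)).inv hpos
  have heq : branch k = (fun x : ℝ => id x + ((k : ℝ) + 1))⁻¹ := by
    funext y
    simp [branch]
  rw [heq]
  exact h

lemma measurableSet_branch (k : ℕ) : MeasurableSet (branch k '' Ioo (0 : ℝ) 1) :=
  measurable_image_of_fderivWithin measurableSet_Ioo
    (fun _ hx => (hasDerivAt_branch k hx).hasFDerivAt.hasFDerivWithinAt) (injOn_branch k)

lemma pairwise_disjoint_branch :
    Pairwise (Function.onFun Disjoint fun k : ℕ => branch k '' Ioo (0 : ℝ) 1) := by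
  intro i j hij
  rw [Function.onFun, Set.disjoint_left]
  rintro _ ⟨x, hx, rfl⟩ ⟨y, hy, hxy⟩
  have h1 := floor_inv_branch (k := i) hx
  rw [← hxy, floor_inv_branch hy] at h1
  omega

lemma iUnion_branch_subset : (⋃ k : ℕ, branch k '' Ioo (0 : ℝ) 1) ⊆ Ioo 0 1 := by
  refine iUnion_subset fun k => ?_
  rintro _ ⟨x, hx, rfl⟩
  exact branch_mem hx

lemma iUnion_branch_ae_eq :
    (⋃ k : ℕ, branch k '' Ioo (0 : ℝ) 1) =ᵐ[volume] Ioo (0 : ℝ) 1 := by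
  have hnull : volume (range fun n : ℤ => 1 / (n : ℝ)) = 0 := (countable_range _).measure_zero _
  refine Filter.EventuallyLE.antisymm (Filter.Eventually.of_forall iUnion_branch_subset) ?_
  filter_upwards [compl_mem_ae_iff.2 hnull] with x hx hx01
  have hx1 : 1 < 1 / x := (one_lt_div hx01.1).2 hx01.2
  obtain ⟨k, hk⟩ : ∃ k : ℕ, ⌊1 / x⌋ = (k : ℤ) + 1 := by
    have h1 : 1 ≤ ⌊1 / x⌋ := Int.le_floor.2 (by exact_mod_cast hx1.le)
    exact ⟨(⌊1 / x⌋ - 1).toNat, by omega⟩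
  obtain ⟨h1, h2⟩ := Int.floor_eq_iff.1 hk
  push_cast at h1 h2
  refine mem_iUnion.2 ⟨k, 1 / x - (k + 1), ⟨?_, by linarith⟩, ?_⟩
  · rcases h1.lt_or_eq with h | h
    · linarith
    · exact absurd ⟨(k : ℤ) + 1, by push_cast; rw [h, one_div_one_div]⟩ hx
  · simp [branch]

lemma norm_ofReal_cpow_neg (s : ℂ) {k : ℕ} {x : ℝ} (hx : x ∈ Ioo (0 : ℝ) 1) (hs : 1 / 2 < s.re) :
    ‖((x + ((k : ℝ) + 1) : ℝ) : ℂ) ^ (-(2 * s))‖ ≤ ((k : ℝ) + 1) ^ (-(2 * s.re)) := by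
  have hk : (0 : ℝ) ≤ k := k.cast_nonneg
  rw [Complex.norm_cpow_eq_rpow_re_of_pos (by linarith [hx.1])]
  have hre : (-(2 * s)).re = -(2 * s.re) := by simp
  rw [hre]
  exact Real.rpow_le_rpow_of_nonpos (by linarith) (by linarith [hx.1]) (by linarith)

lemma summable_majorant {σ : ℝ} (hσ : 1 / 2 < σ) :
    Summable fun k : ℕ => ((k : ℝ) + 1) ^ (-(2 * σ)) := by
  have h := (summable_nat_add_iff 1).2 (Real.summable_nat_rpow (p := -(2 * σ)).2 (by linarith))
  simpa using h

lemma measurable_gaussMap : Measurable gaussMap := by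
  unfold gaussMap
  have h1 : Measurable fun x : ℝ => 1 / x := by fun_prop
  exact h1.sub ((Measurable.of_discrete (f := fun n : ℤ => (n : ℝ))).comp h1.floor)

lemma integrableOn_rhs (s : ℂ) (hs : 1 / 2 < s.re) (f h : ℝ → ℂ) (hfm : Measurable f)
    (hhm : Measurable h) {A B : ℝ} (hA : ∀ x ∈ Ioo (0 : ℝ) 1, ‖f x‖ ≤ A)
    (hB : ∀ x ∈ Ioo (0 : ℝ) 1, ‖h x‖ ≤ B) :
    IntegrableOn (fun x : ℝ => f (gaussMap x) * ((x : ℂ) ^ (2 * s - 2) * h x))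
      (⋃ k : ℕ, branch k '' Ioo (0 : ℝ) 1) := by
  have hA0 : 0 ≤ A := (norm_nonneg _).trans (hA (1 / 2) (by norm_num))
  have hmaj : IntegrableOn (fun x : ℝ => A * (x ^ (2 * s.re - 2) * B))
      (⋃ k : ℕ, branch k '' Ioo (0 : ℝ) 1) := by
    refine IntegrableOn.mono_set ?_ iUnion_branch_subset
    exact (((intervalIntegral.integrableOn_Ioo_rpow_iff one_pos).2
      (by linarith)).mul_const B).const_mul A
  refine Integrable.mono' hmaj ?_ ?_
  · have hm := hfm.comp measurable_gaussMap
    refine Measurable.aestronglyMeasurable (hm.mul (Measurable.mul ?_ hhm))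
    fun_prop
  · refine (ae_restrict_iff' (MeasurableSet.iUnion measurableSet_branch)).2
      (Filter.Eventually.of_forall fun x hx => ?_)
    have hx01 := iUnion_branch_subset hx
    obtain ⟨k, y, hy, rfl⟩ := mem_iUnion.1 hx
    have hre : (2 * s - 2).re = 2 * s.re - 2 := by simp
    rw [norm_mul, norm_mul, gaussMap_branch hy, Complex.norm_cpow_eq_rpow_re_of_pos hx01.1, hre]
    have := Real.rpow_nonneg hx01.1.le (2 * s.re - 2)
    gcongr
    · exact hA y hy
    · exact hB _ hx01

lemma setIntegral_branch (s : ℂ) (f h : ℝ → ℂ) (k : ℕ) :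
    ∫ x in branch k '' Ioo (0 : ℝ) 1, f (gaussMap x) * ((x : ℂ) ^ (2 * s - 2) * h x)
      = ∫ x in Ioo (0 : ℝ) 1, f x * (((x + ((k : ℝ) + 1) : ℝ) : ℂ) ^ (-(2 * s)) *
          h (1 / (x + ((k : ℝ) + 1)))) := by
  rw [integral_image_eq_integral_abs_deriv_smul measurableSet_Ioo
    (fun _ hx => (hasDerivAt_branch k hx).hasDerivWithinAt) (injOn_branch k)]
  refine setIntegral_congr_fun measurableSet_Ioo fun x hx => ?_
  have hk : (0 : ℝ) ≤ k := k.cast_nonneg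
  have hpos : 0 < x + ((k : ℝ) + 1) := by linarith [hx.1]
  simp only [gaussMap_branch hx]
  unfold branch
  generalize x + ((k : ℝ) + 1) = t at hpos ⊢
  have ht : (t : ℂ) ≠ 0 := by exact_mod_cast hpos.ne'
  have habs : |(-1 : ℝ) / t ^ 2| = (t ^ 2)⁻¹ := by
    rw [abs_div, abs_neg, abs_one, abs_of_pos (by positivity), one_div]
  have harg : (t : ℂ).arg ≠ Real.pi := by
    rw [Complex.arg_ofReal_of_nonneg hpos.le]
    exact Real.pi_ne_zero.symm
  have hpow : ((1 / t : ℝ) : ℂ) ^ (2 * s - 2) = (t : ℂ) ^ (-(2 * s)) * (t : ℂ) ^ 2 := by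
    rw [one_div, Complex.ofReal_inv, Complex.inv_cpow _ _ harg, ← Complex.cpow_neg,
      show -(2 * s - 2) = -(2 * s) + (2 : ℕ) by push_cast; ring, Complex.cpow_add _ _ ht,
      Complex.cpow_natCast]
  rw [habs, hpow, Complex.real_smul]
  push_cast
  field_simp

/-- **Duality of the transfer operator `L_s` with the Gauss shift on densities.**
For `Re s > 1/2` and bounded measurable `f, h` on `(0,1)`, the series
`(L_s h)(x) = ∑_{k≥1} (x+k)^{-2s} h(1/(x+k))` converges absolutely for every `x ∈ (0,1)`,
and `∫₀¹ f · L_s h dx = ∫₀¹ (f ∘ T) · x^{2s-2} · h dx`. -/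
theorem transfer_operator_duality (s : ℂ) (hs : 1 / 2 < s.re)
    (f h : ℝ → ℂ) (hfm : Measurable f) (hhm : Measurable h)
    (hfb : ∃ C : ℝ, ∀ x ∈ Ioo (0 : ℝ) 1, ‖f x‖ ≤ C)
    (hhb : ∃ C : ℝ, ∀ x ∈ Ioo (0 : ℝ) 1, ‖h x‖ ≤ C) :
    (∀ x ∈ Ioo (0 : ℝ) 1, Summable fun k : ℕ =>
      ‖((x + ((k : ℝ) + 1) : ℝ) : ℂ) ^ (-(2 * s)) * h (1 / (x + ((k : ℝ) + 1)))‖) ∧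
    ∫ x in Ioo (0 : ℝ) 1,
        f x * ∑' k : ℕ, ((x + ((k : ℝ) + 1) : ℝ) : ℂ) ^ (-(2 * s)) *
          h (1 / (x + ((k : ℝ) + 1)))
      = ∫ x in Ioo (0 : ℝ) 1,
          f (gaussMap x) * (((x : ℝ) : ℂ) ^ (2 * s - 2) * h x) := by
  obtain ⟨A, hA⟩ := hfb
  obtain ⟨B, hB⟩ := hhb
  have hA0 : 0 ≤ A := (norm_nonneg _).trans (hA (1 / 2) (by norm_num))
  have hterm : ∀ (k : ℕ), ∀ x ∈ Ioo (0 : ℝ) 1,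
      ‖((x + ((k : ℝ) + 1) : ℝ) : ℂ) ^ (-(2 * s)) * h (1 / (x + ((k : ℝ) + 1)))‖
        ≤ ((k : ℝ) + 1) ^ (-(2 * s.re)) * B := by
    intro k x hx
    rw [norm_mul]
    exact mul_le_mul (norm_ofReal_cpow_neg s hx hs) (hB _ (branch_mem (k := k) hx))
      (norm_nonneg _) (by positivity)
  refine ⟨fun x hx => Summable.of_nonneg_of_le (fun _ => norm_nonneg _)
    (fun k => hterm k x hx) ((summable_majorant hs).mul_right B), ?_⟩
  set F : ℕ → ℝ → ℂ := fun k x => f x * (((x + ((k : ℝ) + 1) : ℝ) : ℂ) ^ (-(2 * s)) *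
    h (1 / (x + ((k : ℝ) + 1)))) with hF
  have hFb : ∀ k, ∀ x ∈ Ioo (0 : ℝ) 1,
      ‖F k x‖ ≤ A * (((k : ℝ) + 1) ^ (-(2 * s.re)) * B) := by
    intro k x hx
    rw [hF, norm_mul]
    exact mul_le_mul (hA x hx) (hterm k x hx) (norm_nonneg _) hA0
  have hFm : ∀ k, Measurable (F k) := by
    intro k
    refine hfm.mul (Measurable.mul ?_ (hhm.comp ?_)) <;> fun_prop
  have hFi : ∀ k, IntegrableOn (F k) (Ioo (0 : ℝ) 1) := fun k =>
    Measure.integrableOn_of_bounded (by simp) (hFm k).aestronglyMeasurable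
      ((ae_restrict_iff' measurableSet_Ioo).2 (Filter.Eventually.of_forall (hFb k)))
  have hFs : Summable fun k => ∫ x in Ioo (0 : ℝ) 1, ‖F k x‖ := by
    refine Summable.of_nonneg_of_le (fun k => integral_nonneg fun _ => norm_nonneg _)
      (fun k => ?_) (((summable_majorant hs).mul_right B).mul_left A)
    have hmono := setIntegral_mono_on (hFi k).norm
      (integrableOn_const (C := A * (((k : ℝ) + 1) ^ (-(2 * s.re)) * B))
        (by simp : volume (Ioo (0 : ℝ) 1) ≠ ⊤)) measurableSet_Ioo (hFb k)
    simpa using hmono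
  calc _ = ∫ x in Ioo (0 : ℝ) 1, ∑' k, F k x := by simp only [hF, tsum_mul_left]
    _ = ∑' k, ∫ x in Ioo (0 : ℝ) 1, F k x :=
      (integral_tsum_of_summable_integral_norm hFi hFs).symm
    _ = ∑' k, ∫ x in branch k '' Ioo (0 : ℝ) 1,
          f (gaussMap x) * ((x : ℂ) ^ (2 * s - 2) * h x) := by
      simp only [setIntegral_branch, hF]
    _ = ∫ x in ⋃ k : ℕ, branch k '' Ioo (0 : ℝ) 1,
          f (gaussMap x) * ((x : ℂ) ^ (2 * s - 2) * h x) :=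
      (integral_iUnion measurableSet_branch pairwise_disjoint_branch
        (integrableOn_rhs s hs f h hfm hhm hA hB)).symm
    _ = _ := setIntegral_congr_set iUnion_branch_ae_eq
end

section
/- Let x, y ∈ (0,1) be irrational real numbers. Then there exist natural numbers m, n with T^m(x) = T^n(y) (where T^m denotes the m-fold iterate of the Gauss map) if and only if there exist integers a, b, c, d with |ad − bc| = 1, cx + d ≠ 0, and y = (ax + b)/(cx + d). In other words, the equivalence relation on irrational numbers generated by the Gauss shift coincides with equivalence under the fractional-linear action of GL(2,ℤ). -/
/-- The Gauss orbits of the fractional parts of `x` and `y` meet. -/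
def TailEquiv (x y : ℝ) : Prop :=
  ∃ m n : ℕ, gaussMap^[m] (Int.fract x) = gaussMap^[n] (Int.fract y)

/-- `y` is the image of `x` under an integral fractional-linear map of determinant `±1`. -/
def MobEquiv (x y : ℝ) : Prop :=
  ∃ a b c d : ℤ, |a * d - b * c| = 1 ∧ (c : ℝ) * x + d ≠ 0 ∧
    y = ((a : ℝ) * x + b) / ((c : ℝ) * x + d)

lemma gaussMap_eq_fract (x : ℝ) : gaussMap x = Int.fract x⁻¹ := by
  rw [gaussMap, one_div, Int.self_sub_floor]

lemma TailEquiv.refl (x : ℝ) : TailEquiv x x := ⟨0, 0, rfl⟩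

lemma TailEquiv.symm {x y : ℝ} (h : TailEquiv x y) : TailEquiv y x := by
  obtain ⟨m, n, h⟩ := h
  exact ⟨n, m, h.symm⟩

lemma TailEquiv.trans {x y z : ℝ} (h : TailEquiv x y) (h' : TailEquiv y z) : TailEquiv x z := by
  obtain ⟨m, n, h⟩ := h
  obtain ⟨p, q, h'⟩ := h'
  refine ⟨p + m, n + q, ?_⟩
  rw [Function.iterate_add_apply, h, ← Function.iterate_add_apply, Nat.add_comm p n,
    Function.iterate_add_apply, h', ← Function.iterate_add_apply]

lemma tailEquiv_add_int (x : ℝ) (k : ℤ) : TailEquiv x (x + k) :=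
  ⟨0, 0, by simp⟩

lemma gaussMap_gaussMap_one_sub {f : ℝ} (h0 : 0 < f) (h1 : f < 1 / 2) :
    gaussMap (gaussMap (1 - f)) = gaussMap f := by
  have hne : 1 - f ≠ 0 := by linarith
  have hinv : (1 - f)⁻¹ = f / (1 - f) + (1 : ℤ) := by
    push_cast
    field_simp
    ring
  have hfirst : gaussMap (1 - f) = f / (1 - f) := by
    rw [gaussMap_eq_fract, hinv, Int.fract_add_intCast, Int.fract_eq_self]
    constructor
    · apply div_nonneg <;> linarith
    · rw [div_lt_one] <;> linarith
  have hinv' : (f / (1 - f))⁻¹ = f⁻¹ - (1 : ℤ) := by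
    push_cast
    field_simp
  rw [hfirst, gaussMap_eq_fract, hinv', Int.fract_sub_intCast, gaussMap_eq_fract]

lemma tailEquiv_neg (x : ℝ) : TailEquiv x (-x) := by
  by_cases h : Int.fract x = 0
  · refine ⟨0, 0, ?_⟩
    simp only [Function.iterate_zero, id]
    rw [h, Int.fract_neg_eq_zero.2 h]
  · have h0 : 0 < Int.fract x := lt_of_le_of_ne (Int.fract_nonneg x) (Ne.symm h)
    have h1 := Int.fract_lt_one x
    have hneg := Int.fract_neg h
    rcases lt_trichotomy (Int.fract x) (1 / 2) with hlt | heq | hgt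
    · refine ⟨1, 2, ?_⟩
      rw [hneg]
      exact (gaussMap_gaussMap_one_sub h0 hlt).symm
    · refine ⟨0, 0, ?_⟩
      rw [hneg, heq]
      norm_num
    · refine ⟨2, 1, ?_⟩
      rw [hneg]
      have := gaussMap_gaussMap_one_sub (f := 1 - Int.fract x) (by linarith) (by linarith)
      rwa [sub_sub_cancel] at this

lemma tailEquiv_inv_of_lt_one {x : ℝ} (h0 : 0 < x) (h1 : x < 1) : TailEquiv x x⁻¹ := by
  refine ⟨1, 0, ?_⟩
  rw [Int.fract_eq_self.2 ⟨h0.le, h1⟩]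
  exact gaussMap_eq_fract x

lemma tailEquiv_inv_of_pos {x : ℝ} (h0 : 0 < x) : TailEquiv x x⁻¹ := by
  rcases lt_trichotomy x 1 with h | rfl | h
  · exact tailEquiv_inv_of_lt_one h0 h
  · simpa using TailEquiv.refl 1
  · simpa using (tailEquiv_inv_of_lt_one (inv_pos.2 h0) (inv_lt_one_of_one_lt₀ h)).symm

lemma tailEquiv_inv (x : ℝ) : TailEquiv x x⁻¹ := by
  rcases lt_trichotomy x 0 with h | rfl | h
  · have := tailEquiv_inv_of_pos (neg_pos.2 h)
    rw [inv_neg] at this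
    exact ((tailEquiv_neg x).trans this).trans (tailEquiv_neg x⁻¹).symm
  · simpa using TailEquiv.refl 0
  · exact tailEquiv_inv_of_pos h

/-- Elements of `GL(2,ℤ)` preserve tail classes, by the Euclidean algorithm on the first column
`(a, c)`: translating by `-(a / c)` and inverting replaces `c` by `a % c`. -/
lemma tailEquiv_mob {x : ℝ} (hx : Irrational x) (N : ℕ) :
    ∀ a b c d : ℤ, c.natAbs = N → |a * d - b * c| = 1 →
      TailEquiv x (((a : ℝ) * x + b) / ((c : ℝ) * x + d)) := by
  induction N using Nat.strong_induction_on with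
  | _ N ih =>
    intro a b c d hN hdet
    by_cases hc : c = 0
    · subst hc
      have had : |a * d| = 1 := by simpa using hdet
      have hunit : IsUnit (a * d) := Int.isUnit_iff_abs_eq.2 had
      have ha := Int.isUnit_iff.1 (isUnit_of_mul_isUnit_left hunit)
      have hd := Int.isUnit_iff.1 (isUnit_of_mul_isUnit_right hunit)
      have key : ∀ k : ℤ, TailEquiv x (-x + k) := fun k =>
        (tailEquiv_neg x).trans (tailEquiv_add_int _ k)
      rcases ha with rfl | rfl <;> rcases hd with rfl | rfl
      · simpa using tailEquiv_add_int x b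
      · have := key (-b)
        convert this using 1
        push_cast
        ring
      · simpa using key b
      · have := tailEquiv_add_int x (-b)
        convert this using 1
        push_cast
        ring
    · have hden : (c : ℝ) * x + d ≠ 0 := ((hx.intCast_mul hc).add_intCast d).ne_zero
      have hlt : (a % c).natAbs < N := by
        have h1 := Int.emod_nonneg a hc
        have h2 := Int.emod_lt_abs a hc
        rw [Int.abs_eq_natAbs] at h2
        omega
      have hmod : a % c = a - c * (a / c) := Int.emod_def a c
      have hstep := ih _ hlt c d (a % c) (b - d * (a / c)) rfl (by
        rw [hmod, ← hdet, ← abs_neg]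
        congr 1
        ring)
      have hstep' := hstep.trans (tailEquiv_inv _)
      have := hstep'.trans (tailEquiv_add_int _ (a / c))
      convert this using 1
      rw [inv_div, hmod]
      push_cast
      generalize ((a / c : ℤ) : ℝ) = q
      rw [div_add' _ _ _ hden]
      congr 1
      ring

lemma MobEquiv.refl (x : ℝ) : MobEquiv x x := ⟨1, 0, 0, 1, by simp⟩

lemma MobEquiv.symm {x y : ℝ} (h : MobEquiv x y) : MobEquiv y x := by
  obtain ⟨a, b, c, d, hdet, hden, rfl⟩ := h
  have hdet0 : (a : ℝ) * d - b * c ≠ 0 := by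
    have : a * d - b * c ≠ 0 := fun h => by simp [h] at hdet
    exact_mod_cast this
  have hval : ((-c : ℤ) : ℝ) * ((a * x + b) / (c * x + d)) + (a : ℝ)
      = (a * d - b * c) / (c * x + d) := by
    push_cast
    field_simp
    ring
  refine ⟨d, -b, -c, a, ?_, ?_, ?_⟩
  · rw [← hdet]
    congr 1
    ring
  · rw [hval]
    exact div_ne_zero hdet0 hden
  · rw [hval, eq_div_iff (div_ne_zero hdet0 hden)]
    push_cast
    rw [mul_div_assoc', mul_div_assoc', div_add' _ _ _ hden]
    congr 1
    ring

lemma MobEquiv.trans {x y z : ℝ} (h : MobEquiv x y) (h' : MobEquiv y z) : MobEquiv x z := by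
  obtain ⟨a, b, c, d, hdet, hden, rfl⟩ := h
  obtain ⟨a', b', c', d', hdet', hden', rfl⟩ := h'
  have hnum : ((a' * a + b' * c : ℤ) : ℝ) * x + ((a' * b + b' * d : ℤ) : ℝ)
      = (a' * ((a * x + b) / (c * x + d)) + b') * (c * x + d) := by
    push_cast
    field_simp
    ring
  have hden2 : ((c' * a + d' * c : ℤ) : ℝ) * x + ((c' * b + d' * d : ℤ) : ℝ)
      = (c' * ((a * x + b) / (c * x + d)) + d') * (c * x + d) := by
    push_cast
    field_simp
    ring
  refine ⟨a' * a + b' * c, a' * b + b' * d, c' * a + d' * c, c' * b + d' * d, ?_, ?_, ?_⟩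
  · have : (a' * a + b' * c) * (c' * b + d' * d) - (a' * b + b' * d) * (c' * a + d' * c)
        = (a' * d' - b' * c') * (a * d - b * c) := by ring
    rw [this, abs_mul, hdet, hdet', one_mul]
  · rw [hden2]
    exact mul_ne_zero hden' hden
  · rw [hnum, hden2, mul_div_mul_right _ _ hden]

lemma mobEquiv_gaussMap (x : ℝ) : MobEquiv x (gaussMap x) := by
  by_cases hx : x = 0
  · subst hx
    simpa [gaussMap] using MobEquiv.refl 0
  · refine ⟨-⌊1 / x⌋, 1, 1, 0, by simp, by simpa using hx, ?_⟩
    rw [gaussMap]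
    push_cast
    generalize ((⌊1 / x⌋ : ℤ) : ℝ) = q
    rw [one_mul, add_zero, div_sub' hx]
    congr 1
    ring

lemma mobEquiv_iterate (x : ℝ) (m : ℕ) : MobEquiv x (gaussMap^[m] x) := by
  induction m with
  | zero => exact MobEquiv.refl x
  | succ m ih =>
    rw [Function.iterate_succ_apply']
    exact ih.trans (mobEquiv_gaussMap _)

/-- **The equivalence relation generated by the Gauss shift is the `GL(2,ℤ)` fractional-linear
equivalence.** For irrational `x, y ∈ (0,1)`: some iterates of the Gauss map agree,
`T^[m] x = T^[n] y`, if and only if `y = (ax+b)/(cx+d)` for some integers `a,b,c,d` with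
`|ad - bc| = 1` and `cx + d ≠ 0`. -/
theorem gauss_shift_equiv_GL2Z (x y : ℝ)
    (hx : x ∈ Set.Ioo (0 : ℝ) 1) (hy : y ∈ Set.Ioo (0 : ℝ) 1)
    (hxi : Irrational x) (hyi : Irrational y) :
    (∃ m n : ℕ, gaussMap^[m] x = gaussMap^[n] y) ↔
    (∃ a b c d : ℤ, |a * d - b * c| = 1 ∧ (c : ℝ) * x + d ≠ 0 ∧
      y = ((a : ℝ) * x + b) / ((c : ℝ) * x + d)) := by
  constructor
  · rintro ⟨m, n, h⟩
    have hxm := mobEquiv_iterate x m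
    rw [h] at hxm
    exact hxm.trans (mobEquiv_iterate y n).symm
  · rintro ⟨a, b, c, d, hdet, -, hxy⟩
    obtain ⟨m, n, h⟩ := tailEquiv_mob hxi _ a b c d rfl hdet
    rw [← hxy, Int.fract_eq_self.2 ⟨hx.1.le, hx.2⟩, Int.fract_eq_self.2 ⟨hy.1.le, hy.2⟩] at h
    exact ⟨m, n, h⟩
end

section
/- Let θ, θ' be irrational real numbers and let τ, τ' be complex numbers with nonzero imaginary part. Let P = ℤ + ℤθ + ℤτ and P' = ℤ + ℤθ' + ℤτ' be the corresponding subgroups of ℂ. Then there exists a nonzero complex number λ with λ·P = P' (i.e. the ℂ-linear map z ↦ λz carries P onto P') if and only if there exist integers a, b, c, d, e, f with |ad − bc| = 1 such that θ' = (aθ + b)/(cθ + d) and τ' = (τ + eθ + f)/(cθ + d). -/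
/-!
If `λ P = P'`, comparing imaginary parts of `λ · 1, λ · θ ∈ P'` gives integers `k₁, k₂` with
`Im λ = k₁ Im τ'` and `θ Im λ = k₂ Im τ'`; irrationality of `θ` forces `Im λ = 0`
(`im_eq_zero_of_mem`). So `λ` is real and carries the real part `ℤ + ℤθ` of `P` onto the real part
`ℤ + ℤθ'` of `P'`. Writing `μ = λ⁻¹`, the integer matrix of `(μ, μθ')` in the basis `(1, θ)` has the
matrix of `(λ, λθ)` in the basis `(1, θ')` as its inverse, hence determinant `±1`. In the same way
the `τ`-coefficient of `μτ'` is a unit `k = ±1`, which is absorbed by replacing `μ` with `kμ`.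
Conversely `λ = (cθ + d)⁻¹` works, the coefficients of `λz` in `P'` being given by Cramer's rule.
-/

lemma int_add_mul_irrational_eq_zero {θ : ℝ} (hθ : Irrational θ) {p q : ℤ}
    (h : (p : ℝ) + q * θ = 0) : p = 0 ∧ q = 0 := by
  have hq : q = 0 := by
    by_contra hq
    have hq' : (q : ℝ) ≠ 0 := by exact_mod_cast hq
    apply hθ
    refine ⟨-p / q, ?_⟩
    push_cast
    field_simp
    linarith
  subst hq
  simpa using h

/-- If `1` and `θ` are both multiplied by `l` into the lattice `ℤ + ℤθ' + ℤτ'`, then `l` is real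
and both products have vanishing `τ'`-coefficient. -/
lemma im_eq_zero_of_mem {θ θ' : ℝ} (hθ : Irrational θ) {τ' l : ℂ} (hτ' : τ'.im ≠ 0)
    {m₁ n₁ k₁ m₂ n₂ k₂ : ℤ} (h₁ : l = m₁ + n₁ * θ' + k₁ * τ')
    (h₂ : l * θ = m₂ + n₂ * θ' + k₂ * τ') : l.im = 0 ∧ k₁ = 0 ∧ k₂ = 0 := by
  have i₁ := congrArg Complex.im h₁
  have i₂ := congrArg Complex.im h₂
  simp at i₁ i₂
  have h : ((-k₂ : ℤ) : ℝ) + k₁ * θ = 0 := by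
    apply mul_right_cancel₀ hτ'
    push_cast
    rw [i₁] at i₂
    linarith
  obtain ⟨a, b⟩ := int_add_mul_irrational_eq_zero hθ h
  have a' : k₂ = 0 := by omega
  exact ⟨by rw [i₁, b]; simp, b, a'⟩

/-- **Classification of isomorphisms of CR-lattices.**
Let `P = ℤ + ℤθ + ℤτ` and `P' = ℤ + ℤθ' + ℤτ'` in `ℂ`, with `θ, θ'` irrational reals and
`Im τ, Im τ' ≠ 0`. There is a nonzero `λ ∈ ℂ` with `λ·P = P'` if and only if there are
integers `a,b,c,d,e,f` with `|ad - bc| = 1`, `θ' = (aθ+b)/(cθ+d)` and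
`τ' = (τ + eθ + f)/(cθ + d)`. -/
theorem cr_lattice_iso_iff (θ θ' : ℝ) (hθ : Irrational θ) (hθ' : Irrational θ')
    (τ τ' : ℂ) (hτ : τ.im ≠ 0) (hτ' : τ'.im ≠ 0) :
    (∃ lam : ℂ, lam ≠ 0 ∧
      (fun z => lam * z) ''
          {z : ℂ | ∃ m n k : ℤ, z = (m : ℂ) + (n : ℂ) * (θ : ℂ) + (k : ℂ) * τ}
        = {z : ℂ | ∃ m n k : ℤ, z = (m : ℂ) + (n : ℂ) * (θ' : ℂ) + (k : ℂ) * τ'}) ↔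
    (∃ a b c d e f : ℤ, |a * d - b * c| = 1 ∧
      θ' = ((a : ℝ) * θ + b) / ((c : ℝ) * θ + d) ∧
      τ' = (τ + (e : ℂ) * (θ : ℂ) + (f : ℂ)) / ((c : ℂ) * (θ : ℂ) + (d : ℂ))) := by
  constructor
  · rintro ⟨l, hl, hP⟩
    have fwd : ∀ m n k : ℤ, ∃ m' n' k' : ℤ,
        l * ((m : ℂ) + n * θ + k * τ) = m' + n' * θ' + k' * τ' := fun m n k =>
      hP.subset ⟨_, ⟨m, n, k, rfl⟩, rfl⟩
    have bwd : ∀ m n k : ℤ, ∃ m' n' k' : ℤ,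
        (m : ℂ) + n * θ' + k * τ' = l * (m' + n' * θ + k' * τ) := by
      intro m n k
      obtain ⟨z, ⟨m', n', k', rfl⟩, h⟩ := hP.superset ⟨m, n, k, rfl⟩
      exact ⟨m', n', k', h.symm⟩
    obtain ⟨d', c', k₁, h₁⟩ := fwd 1 0 0
    obtain ⟨b', a', k₂, h₂⟩ := fwd 0 1 0
    obtain ⟨f', e', k', h₃⟩ := fwd 0 0 1
    obtain ⟨d, c, j₁, g₁⟩ := bwd 1 0 0
    obtain ⟨b, a, j₂, g₂⟩ := bwd 0 1 0
    obtain ⟨f, e, k, g₃⟩ := bwd 0 0 1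
    simp only [Int.cast_zero, Int.cast_one, zero_mul, one_mul, add_zero, zero_add, mul_one]
      at h₁ h₂ h₃ g₁ g₂ g₃
    obtain ⟨hl0, rfl, rfl⟩ := im_eq_zero_of_mem hθ hτ' h₁ h₂
    have hinv : l⁻¹ = d + c * θ + j₁ * τ := by
      field_simp
      exact g₁
    have hinv2 : l⁻¹ * θ' = b + a * θ + j₂ * τ := by
      rw [g₂]
      field_simp
    obtain ⟨-, rfl, rfl⟩ := im_eq_zero_of_mem hθ' hτ hinv hinv2
    -- from here on everything takes place over the reals, apart from `τ` and `τ'`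
    obtain ⟨r, rfl⟩ : ∃ r : ℝ, l = r := ⟨l.re, Complex.ext (by simp) (by simp [hl0])⟩
    simp only [Int.cast_zero, zero_mul, add_zero] at h₁ h₂ g₁ g₂
    norm_cast at h₁ h₂ g₁ g₂ hl
    -- the `τ`-coefficients `k` and `k'` are mutually inverse
    have i₁ := congrArg Complex.im h₃
    have i₂ := congrArg Complex.im g₃
    simp at i₁ i₂
    have hk : k * k' = 1 := by
      have : (k : ℝ) * k' = 1 := by
        apply mul_right_cancel₀ hτ'
        linear_combination -(k : ℝ) * i₁ - i₂
      exact_mod_cast this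
    have hk2 : k * k = 1 := by
      rcases Int.isUnit_iff.1 (IsUnit.of_mul_eq_one _ hk) with h | h <;> simp [h]
    -- the two integer `2 × 2` matrices are mutually inverse
    have e₁ : ((d' * d + c' * b - 1 : ℤ) : ℝ) + (d' * c + c' * a : ℤ) * θ = 0 := by
      apply mul_left_cancel₀ hl
      push_cast
      linear_combination -(d' : ℝ) * g₁ - c' * g₂ - h₁
    have e₂ : ((b' * d + a' * b : ℤ) : ℝ) + (b' * c + a' * a - 1 : ℤ) * θ = 0 := by
      apply mul_left_cancel₀ hl
      push_cast
      linear_combination -(b' : ℝ) * g₁ - a' * g₂ - h₂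
    obtain ⟨p₁, p₂⟩ := int_add_mul_irrational_eq_zero hθ e₁
    obtain ⟨p₃, p₄⟩ := int_add_mul_irrational_eq_zero hθ e₂
    have hdet : (a * d - b * c) * (a' * d' - b' * c') = 1 := by
      linear_combination (b' * c + a' * a) * p₁ + p₄ - (b' * d + a' * b) * p₂
    have hμ : (c : ℝ) * θ + d ≠ 0 := by
      intro h
      rw [add_comm, h] at g₁
      simp at g₁
    have hkR : (k : ℝ) * k = 1 := by exact_mod_cast hk2
    have hk0 : (k : ℝ) ≠ 0 := left_ne_zero_of_mul_eq_one hkR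
    refine ⟨k * a, k * b, k * c, k * d, k * e, k * f, ?_, ?_, ?_⟩
    · have : k * a * (k * d) - k * b * (k * c) = a * d - b * c := by
        linear_combination (a * d - b * c) * hk2
      rw [this]
      exact Int.isUnit_iff_abs_eq.1 (IsUnit.of_mul_eq_one _ hdet)
    · have hne : ((k * c : ℤ) : ℝ) * θ + (k * d : ℤ) ≠ 0 := by
        push_cast
        rw [mul_assoc, ← mul_add]
        exact mul_ne_zero hk0 hμ
      rw [eq_div_iff hne]
      push_cast
      linear_combination (k * (c * θ + d) : ℝ) * g₂ - (k * (b + a * θ) : ℝ) * g₁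
    · have hne : ((k * c : ℤ) : ℂ) * θ + (k * d : ℤ) ≠ 0 := by
        have : ((k * c : ℤ) : ℝ) * θ + (k * d : ℤ) ≠ 0 := by
          push_cast
          rw [mul_assoc, ← mul_add]
          exact mul_ne_zero hk0 hμ
        exact_mod_cast this
      have g₁C : (1 : ℂ) = r * (d + c * θ) := by exact_mod_cast g₁
      have hkC : (k : ℂ) * k = 1 := by exact_mod_cast hk2
      rw [eq_div_iff hne]
      push_cast
      linear_combination (k * (c * θ + d) : ℂ) * g₃ - (k * (f + e * θ + k * τ) : ℂ) * g₁C + τ * hkC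
  · rintro ⟨a, b, c, d, e, f, hdet, h₁, h₂⟩
    have hε : (a * d - b * c) * (a * d - b * c) = 1 := by
      rw [← abs_mul_abs_self, hdet, one_mul]
    have hμ : (c : ℝ) * θ + d ≠ 0 := by
      intro h
      rw [add_comm] at h
      obtain ⟨rfl, rfl⟩ := int_add_mul_irrational_eq_zero hθ h
      simp at hdet
    have hμC : (c : ℂ) * θ + d ≠ 0 := by exact_mod_cast hμ
    have h₁C : (θ' : ℂ) = (a * θ + b) / (c * θ + d) := by rw [h₁]; push_cast; rfl
    have hεC : ((a : ℂ) * d - b * c) * (a * d - b * c) = 1 := by exact_mod_cast hε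
    refine ⟨(c * θ + d)⁻¹, inv_ne_zero hμC, Set.Subset.antisymm ?_ ?_⟩
    · rintro _ ⟨_, ⟨m, n, k, rfl⟩, rfl⟩
      -- Cramer's rule, the determinant being its own inverse
      refine ⟨(a * d - b * c) * (a * (m - k * f) - b * (n - k * e)),
        (a * d - b * c) * (d * (n - k * e) - c * (m - k * f)), k, ?_⟩
      rw [h₁C, h₂]
      simp only []
      field_simp
      push_cast
      linear_combination (-(m - k * f) - (n - k * e) * θ : ℂ) * hεC
    · rintro _ ⟨m, n, k, rfl⟩
      refine ⟨_, ⟨m * d + n * b + k * f, m * c + n * a + k * e, k, rfl⟩, ?_⟩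
      rw [h₁C, h₂]
      simp only []
      field_simp
      push_cast
      ring
end

section
/- Let θ be an irrational real number and g = [[a,b],[c,d]] ∈ SL(2,ℤ) (so ad − bc = 1) with c ≥ 1; note cθ + d ≠ 0. Define linear operators on the space of functions f : ℝ × ℤ/cℤ → ℂ by: (U₁ f)(x, α) = f(x − (d + cθ)/c, α − 1); (U₂ f)(x, α) = exp(2πi(x − ᾱd/c)) f(x, α); (V₁ f)(x, α) = f(x − 1/c, α − a); (V₂ f)(x, α) = exp(2πi(x/(cθ + d) − ᾱ/c)) f(x, α); where ᾱ ∈ ℤ is any lift of α ∈ ℤ/cℤ (the exponential factors are independent of the choice of lift). Then: (1) each of V₁, V₂ commutes with each of U₁, U₂, i.e. V₁∘U₁ = U₁∘V₁, V₁∘U₂ = U₂∘V₁, V₂∘U₁ = U₁∘V₂, V₂∘U₂ = U₂∘V₂; and (2) V₁ ∘ V₂ = e^{2πi(aθ+b)/(cθ+d)} · (V₂ ∘ V₁). -/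
/-!
Every composite of two of the operators multiplies `f` by a phase and translates its argument.
The translations agree because `ℝ × ℤ/cℤ` is commutative, so each relation reduces to comparing
two phases, which may differ by an integer inside `exp(2πi ·)`. Passing from the lift of `α - m`
to (lift of `α`) `- m` costs a multiple `k * c` of `c` (`exists_val_sub_intCast`), and this
contributes an integer to each phase. What is left is arithmetic with `a * d - b * c = 1`:
`(a * d - 1) / c = b` gives `V₁ U₂ = U₂ V₁`, and
`a / c - 1 / (c * (c * θ + d)) = (a * θ + b) / (c * θ + d)` gives the relation between `V₁`
and `V₂`. Irrationality of `θ` enters only through `c * θ + d ≠ 0`.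
-/

/-- Right action operator `U₁` on `E_g(θ)`: `(U₁ f)(x, α) = f(x - (d + cθ)/c, α - 1)`. -/
noncomputable def basicU₁ (θ : ℝ) (c : ℕ) (d : ℤ)
    (f : ℝ × ZMod c → ℂ) : ℝ × ZMod c → ℂ :=
  fun p => f (p.1 - ((d : ℝ) + (c : ℝ) * θ) / (c : ℝ), p.2 - 1)

/-- Right action operator `U₂` on `E_g(θ)`: `(U₂ f)(x, α) = exp(2πi(x - ᾱd/c)) f(x, α)`,
with the lift `ᾱ = α.val`. -/
noncomputable def basicU₂ (c : ℕ) (d : ℤ)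
    (f : ℝ × ZMod c → ℂ) : ℝ × ZMod c → ℂ :=
  fun p => Complex.exp (2 * Real.pi * Complex.I *
    ((p.1 : ℂ) - ((p.2.val : ℂ) * (d : ℂ)) / (c : ℂ))) * f p

/-- Endomorphism generator `V₁`: `(V₁ f)(x, α) = f(x - 1/c, α - a)`. -/
noncomputable def basicV₁ (c : ℕ) (a : ℤ)
    (f : ℝ × ZMod c → ℂ) : ℝ × ZMod c → ℂ :=
  fun p => f (p.1 - 1 / (c : ℝ), p.2 - (a : ZMod c))

/-- Endomorphism generator `V₂`: `(V₂ f)(x, α) = exp(2πi(x/(cθ+d) - ᾱ/c)) f(x, α)`,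
with the lift `ᾱ = α.val`. -/
noncomputable def basicV₂ (θ : ℝ) (c : ℕ) (d : ℤ)
    (f : ℝ × ZMod c → ℂ) : ℝ × ZMod c → ℂ :=
  fun p => Complex.exp (2 * Real.pi * Complex.I *
    (((p.1 / ((c : ℝ) * θ + d) : ℝ) : ℂ) - (p.2.val : ℂ) / (c : ℂ))) * f p

/-- The standard lift of `α - m` differs from (lift of `α`) `- m` by a multiple of `c`. -/
theorem exists_val_sub_intCast (c : ℕ) (hc : 1 ≤ c) (α : ZMod c) (m : ℤ) :
    ∃ k : ℤ, ((α - (m : ZMod c)).val : ℂ) = (α.val : ℂ) - m + k * c := by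
  have : NeZero c := ⟨by omega⟩
  have h : ((((α - (m : ZMod c)).val : ℤ) - ((α.val : ℤ) - m) : ℤ) : ZMod c) = 0 := by
    push_cast
    simp
  obtain ⟨k, hk⟩ := (ZMod.intCast_zmod_eq_zero_iff_dvd _ c).1 h
  refine ⟨k, ?_⟩
  have hkC : (((α - (m : ZMod c)).val : ℤ) : ℂ) - ((α.val : ℤ) - m) = c * k := by
    exact_mod_cast hk
  push_cast at hkC
  linear_combination hkC

/-- `exp(2πi ·)` is invariant under integer shifts. -/
theorem exp_two_pi_I_eq_of_sub_int {z w : ℂ} (n : ℤ) (h : z = w + n) :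
    Complex.exp (2 * Real.pi * Complex.I * z) = Complex.exp (2 * Real.pi * Complex.I * w) := by
  rw [Complex.exp_eq_exp_iff_exists_int]
  exact ⟨n, by rw [h]; ring⟩

/-- **Polishchuk's bimodule relations for the basic module `E_g(θ)`** with
`g = [[a,b],[c,d]] ∈ SL(2,ℤ)`, `c ≥ 1`, `θ` irrational: the operators `V₁, V₂` commute with
the right-action operators `U₁, U₂`, and satisfy `V₁ ∘ V₂ = e^{2πi(aθ+b)/(cθ+d)} (V₂ ∘ V₁)`,
the defining relation of the noncommutative torus `A_{gθ}`. -/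
theorem basic_module_bimodule_relations (θ : ℝ) (hθ : Irrational θ)
    (a b : ℤ) (c : ℕ) (d : ℤ) (hc : 1 ≤ c) (hdet : a * d - b * (c : ℤ) = 1) :
    (∀ (f : ℝ × ZMod c → ℂ) (x : ℝ) (α : ZMod c),
      basicV₁ c a (basicU₁ θ c d f) (x, α) = basicU₁ θ c d (basicV₁ c a f) (x, α)) ∧
    (∀ (f : ℝ × ZMod c → ℂ) (x : ℝ) (α : ZMod c),
      basicV₁ c a (basicU₂ c d f) (x, α) = basicU₂ c d (basicV₁ c a f) (x, α)) ∧
    (∀ (f : ℝ × ZMod c → ℂ) (x : ℝ) (α : ZMod c),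
      basicV₂ θ c d (basicU₁ θ c d f) (x, α) = basicU₁ θ c d (basicV₂ θ c d f) (x, α)) ∧
    (∀ (f : ℝ × ZMod c → ℂ) (x : ℝ) (α : ZMod c),
      basicV₂ θ c d (basicU₂ c d f) (x, α) = basicU₂ c d (basicV₂ θ c d f) (x, α)) ∧
    (∀ (f : ℝ × ZMod c → ℂ) (x : ℝ) (α : ZMod c),
      basicV₁ c a (basicV₂ θ c d f) (x, α)
        = Complex.exp (2 * Real.pi * Complex.I *
            ((((a : ℝ) * θ + b) / ((c : ℝ) * θ + d) : ℝ) : ℂ)) *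
          basicV₂ θ c d (basicV₁ c a f) (x, α)) := by
  have hc0 : (c : ℂ) ≠ 0 := by
    exact_mod_cast (by omega : c ≠ 0)
  have hD : (c : ℝ) * θ + d ≠ 0 := by
    have h : Irrational ((c : ℝ) * θ + d) :=
      (hθ.natCast_mul (by omega : c ≠ 0)).add_intCast d
    exact h.ne_zero
  have hDC : (c : ℂ) * (θ : ℂ) + d ≠ 0 := by exact_mod_cast hD
  have hdetC : (a : ℂ) * d - b * c = 1 := by exact_mod_cast hdet
  refine ⟨?_, ?_, ?_, ?_, ?_⟩
  · intro f x α
    simp only [basicV₁, basicU₁]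
    congr 2 <;> ring
  · intro f x α
    obtain ⟨k, hk⟩ := exists_val_sub_intCast c hc α a
    simp only [basicV₁, basicU₂]
    congr 1
    apply exp_two_pi_I_eq_of_sub_int (b - k * d)
    rw [hk]
    push_cast
    field_simp
    linear_combination hdetC
  · intro f x α
    obtain ⟨k, hk⟩ := exists_val_sub_intCast c hc α 1
    rw [Int.cast_one] at hk
    simp only [basicV₂, basicU₁]
    congr 1
    apply exp_two_pi_I_eq_of_sub_int k
    rw [hk]
    push_cast
    field_simp
    ring
  · intro f x α
    simp only [basicV₂, basicU₂]
    ring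
  · intro f x α
    obtain ⟨k, hk⟩ := exists_val_sub_intCast c hc α a
    simp only [basicV₁, basicV₂]
    rw [← mul_assoc, ← Complex.exp_add, ← mul_add]
    congr 1
    apply exp_two_pi_I_eq_of_sub_int (-k)
    rw [hk]
    push_cast
    field_simp
    linear_combination hdetC
end
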